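/- arXiv:2407.04462 — 6 statements merged into one kernel-verified Lean document; each statement's English description precedes it below -/
import Mathlib

section
/- Let Σ = {a_1, …, a_k} be an alphabet with k ≥ 2 distinct letters. There exists a monoid homomorphism Φ from (Σ*, concatenation) to the multiplicative monoid of 3(k−1) × 3(k−1) integer matrices such that for every word w over Σ and all indices 1 ≤ i < j ≤ k, the entry of Φ(w) in row i and column 2(k−1) + (j−1) equals f^w_{a_i a_{i+1} ⋯ a_j}, the number of occurrences of the word a_i a_{i+1} ⋯ a_j as a factor of w. -/
/-- Number of occurrences of `u` as a factor of `w`. -/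
def factorCount {α : Type*} [DecidableEq α] (w u : List α) : ℕ :=
  ((Finset.range (w.length + 1 - u.length)).filter fun i => (w.drop i).take u.length = u).card

theorem fc_cons {α : Type*} [DecidableEq α] (c : α) (w u : List α) (hu : u ≠ []) :
    factorCount (c :: w) u = factorCount w u + if u <+: (c :: w) then 1 else 0 := by
  unfold factorCount
  have hpos : 0 < u.length := List.length_pos_iff.mpr hu
  by_cases h : u.length ≤ w.length + 1
  · have e : (c :: w).length + 1 - u.length = (w.length + 1 - u.length) + 1 := by
      simp only [List.length_cons]; omega
    rw [e]
    simp only [Finset.card_filter]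
    rw [Finset.sum_range_succ']
    simp only [List.drop_succ_cons, List.drop_zero]
    congr 1
    have : (List.take u.length (c :: w) = u) ↔ u <+: (c :: w) := by
      rw [List.prefix_iff_eq_take]; exact eq_comm
    simp only [this]
  · have e : (c :: w).length + 1 - u.length = 0 := by
      simp only [List.length_cons]; omega
    have e' : w.length + 1 - u.length = 0 := by omega
    have : ¬ u <+: (c :: w) := fun hp => h (by simpa using hp.length_le)
    rw [e, e', if_neg this]; simp

def segU (k i j : ℕ) : List (Fin k) := (List.finRange k).filter fun t => i ≤ t.val ∧ t.val ≤ j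

theorem segU_cons (k i j : ℕ) (hij : i ≤ j) (hi : i < k) :
    segU k i j = ⟨i, hi⟩ :: segU k (i+1) j := by
  have hs : ∀ a b, (segU k a b).Pairwise (· < ·) := fun a b =>
    (List.pairwise_lt_finRange k).filter _
  have h2 : (⟨i, hi⟩ :: segU k (i+1) j).Pairwise (· < ·) := by
    rw [List.pairwise_cons]
    refine ⟨?_, hs _ _⟩
    intro a ha
    simp [segU] at ha
    rw [Fin.lt_def]; simp; omega
  refine List.Perm.eq_of_pairwise (le := (· < ·)) ?_ (hs _ _) h2 ?_
  · intro a b _ _ h1 h2; exact absurd h1 (lt_asymm h2)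
  · rw [List.perm_ext_iff_of_nodup ((hs _ _).imp ne_of_lt) (h2.imp ne_of_lt)]
    intro a
    simp only [segU, List.mem_filter, List.mem_finRange, List.mem_cons, Fin.ext_iff, true_and,
      decide_eq_true_eq]
    omega

theorem segU_nil (k i j : ℕ) (hij : j < i) : segU k i j = [] := by
  simp only [segU, List.filter_eq_nil_iff, decide_eq_true_eq]
  intros; omega

def extV {m : ℕ} (v : Fin m → ℤ) (t : ℕ) : ℤ := if h : t < m then v ⟨t, h⟩ else 0

def stepT (n c : ℕ) : Module.End ℤ (Fin (3 * n) → ℤ) where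
  toFun v r :=
    if r.val < n then v r + (if c = r.val then extV v (r.val + n) else 0)
    else if r.val < 2 * n then
      (if c = r.val - n + 1 then
        (if r.val + 1 < 2 * n then extV v (r.val + 1) else 0) + extV v (r.val + n) else 0)
    else v r
  map_add' v w := by
    funext r
    simp only [extV, Pi.add_apply]
    split_ifs <;> ring
  map_smul' a v := by
    funext r
    simp only [extV, Pi.smul_apply, smul_eq_mul, RingHom.id_apply]
    split_ifs <;> ring

theorem extV_stepT (n c : ℕ) (v : Fin (3 * n) → ℤ) (r : ℕ) (hr : r < 3 * n) :
    extV (stepT n c v) r =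
    if r < n then extV v r + (if c = r then extV v (r + n) else 0)
    else if r < 2 * n then
      (if c = r - n + 1 then
        (if r + 1 < 2 * n then extV v (r + 1) else 0) + extV v (r + n) else 0)
    else extV v r := by
  conv_lhs => rw [extV, dif_pos hr]
  have : extV v r = v ⟨r, hr⟩ := by rw [extV, dif_pos hr]
  rw [this]; rfl

def runT (n : ℕ) (w : List (Fin (n+1))) : Module.End ℤ (Fin (3 * n) → ℤ) :=
  (w.map fun c => stepT n c.val).prod

theorem runT_cons (n : ℕ) (c : Fin (n+1)) (w : List (Fin (n+1))) (v) :
    runT n (c :: w) v = stepT n c.val (runT n w v) := by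
  simp [runT]

theorem run_Q (n : ℕ) (w : List (Fin (n+1))) (v) (r : ℕ) (h1 : 2 * n ≤ r) (h2 : r < 3 * n) :
    extV (runT n w v) r = extV v r := by
  induction w with
  | nil => simp [runT]
  | cons c w ih =>
    rw [runT_cons, extV_stepT _ _ _ _ h2, if_neg (by omega), if_neg (by omega), ih]

theorem extV_single (m s r : ℕ) (hs : s < m) :
    extV (Pi.single (⟨s, hs⟩ : Fin m) (1 : ℤ)) r = if r = s then 1 else 0 := by
  unfold extV
  split_ifs with h h' h'
  · subst h'; simp
  · rw [Pi.single_eq_of_ne]; simpa [Fin.ext_iff] using h'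
  · omega
  · rfl

theorem run_M (n : ℕ) (w : List (Fin (n+1))) (j : ℕ) (hj1 : j < n)
    (hs : 2 * n + j < 3 * n) (l : ℕ) (hl : l < n) :
    extV (runT n w (Pi.single ⟨2 * n + j, hs⟩ 1)) (n + l) =
      if l ≤ j ∧ segU (n+1) (l+1) (j+1) <+: w then 1 else 0 := by
  induction w generalizing l with
  | nil =>
    simp only [runT, List.map_nil, List.prod_nil, Module.End.one_apply, extV_single]
    rw [if_neg (by omega), if_neg]
    rintro ⟨h1, h2⟩
    rw [segU_cons _ _ _ (by omega) (by omega)] at h2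
    simp at h2
  | cons c w ih =>
    rw [runT_cons, extV_stepT _ _ _ _ (by omega), if_neg (by omega), if_pos (by omega),
      run_Q _ _ _ (n + l + n) (by omega) (by omega), extV_single]
    by_cases hlj : l ≤ j
    · simp only [segU_cons (n+1) (l+1) (j+1) (by omega) (by omega), List.cons_prefix_cons]
      by_cases hc : c.val = l + 1
      · rw [if_pos (by omega)]
        have hc' : (⟨l + 1, by omega⟩ : Fin (n+1)) = c := by ext; simp [hc]
        simp only [hc', hlj, true_and]
        rcases hlj.eq_or_lt with e | e
        · subst e
          simp only [segU_nil (n+1) (l+1+1) (l+1) (by omega)]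
          rw [if_pos (show n + l + n = 2 * n + l by omega)]
          simp only [List.nil_prefix, if_true]
          split_ifs with h
          · rw [show n + l + 1 = n + (l + 1) by omega, ih _ (by omega), if_neg (by omega)]; rfl
          · rfl
        · rw [if_pos (by omega), if_neg (show ¬ n + l + n = 2 * n + j by omega),
            show n + l + 1 = n + (l + 1) by omega, ih _ (by omega)]
          simp [show l + 1 ≤ j from e]
      · rw [if_neg (by omega), if_neg]
        rintro ⟨_, h, _⟩
        exact hc (by rw [← h])
    · rw [if_neg (show ¬ (l ≤ j ∧ _) from fun h => hlj h.1),
        if_neg (show ¬ n + l + n = 2 * n + j by omega)]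
      split_ifs with h1 h2
      · rw [show n + l + 1 = n + (l + 1) by omega, ih _ (by omega), if_neg (by omega)]; rfl
      · rfl
      · rfl

theorem run_P (n : ℕ) (w : List (Fin (n+1))) (j : ℕ) (hj1 : j < n)
    (hs : 2 * n + j < 3 * n) (i : ℕ) (hi : i ≤ j) :
    extV (runT n w (Pi.single ⟨2 * n + j, hs⟩ 1)) i =
      (factorCount w (segU (n+1) i (j+1)) : ℤ) := by
  have hseg := segU_cons (n+1) i (j+1) (by omega) (by omega)
  induction w with
  | nil =>
    simp only [runT, List.map_nil, List.prod_nil, Module.End.one_apply, extV_single]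
    rw [if_neg (by omega), hseg]
    simp [factorCount]
  | cons c w ih =>
    rw [runT_cons, extV_stepT _ _ _ _ (by omega), if_pos (by omega), ih,
      fc_cons _ _ _ (by rw [hseg]; simp), add_comm i n, run_M _ _ _ hj1 _ _ (by omega)]
    push_cast
    congr 1
    simp only [hseg, List.cons_prefix_cons]
    simp only [hi, true_and, Fin.ext_iff, eq_comm (a := c.val)]
    clear ih hseg
    split_ifs <;> first | rfl | (exfalso; tauto)

/-- There is a monoid homomorphism `Φ` from words over the `k`-letter alphabet `Fin k`
(with letters `a_1 < ⋯ < a_k` being `0 < 1 < ⋯ < k-1`) to `3(k-1) × 3(k-1)` integer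
matrices, such that for `1 ≤ i < j ≤ k` (here `i, j : Fin k`, `i < j`, 0-indexed) the entry
of `Φ(w)` in (1-indexed) row `i` and column `2(k-1) + (j-1)` is the number of occurrences
of the word `a_i a_{i+1} ⋯ a_j` as a factor of `w`. -/
theorem stmt2 (k : ℕ) (hk : 2 ≤ k) :
    ∃ Φ : List (Fin k) → Matrix (Fin (3 * (k - 1))) (Fin (3 * (k - 1))) ℤ,
      (∀ w1 w2 : List (Fin k), Φ (w1 ++ w2) = Φ w1 * Φ w2) ∧ Φ [] = 1 ∧
      ∀ (w : List (Fin k)) (i j : Fin k), i < j →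
        ∀ (hr : (i : ℕ) < 3 * (k - 1)) (hc : 2 * (k - 1) + (j : ℕ) - 1 < 3 * (k - 1)),
          Φ w ⟨(i : ℕ), hr⟩ ⟨2 * (k - 1) + (j : ℕ) - 1, hc⟩ =
            (factorCount w ((List.finRange k).filter fun t => i ≤ t ∧ t ≤ j) : ℤ) := by
  obtain ⟨n, rfl⟩ : ∃ n, k = n + 1 := ⟨k - 1, by omega⟩
  refine ⟨fun w => LinearMap.toMatrix' (runT n w), ?_, ?_, ?_⟩
  · intro w1 w2
    have : runT n (w1 ++ w2) = runT n w1 * runT n w2 := by simp [runT]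
    simp only [this]
    exact LinearMap.toMatrix'_mul _ _
  · have : runT n [] = 1 := by simp [runT]
    simp only [this]
    exact LinearMap.toMatrix'_one
  · intro w i j hij hr hc
    obtain ⟨i, hi⟩ := i
    obtain ⟨j, hj⟩ := j
    rw [Fin.mk_lt_mk] at hij
    obtain ⟨j, rfl⟩ : ∃ j', j = j' + 1 := ⟨j - 1, by omega⟩
    have key := run_P n w j (by omega) (by omega) i (by omega)
    rw [extV, dif_pos (show i < 3 * n by omega)] at key
    refine (LinearMap.toMatrix'_apply _ _ _).trans ?_
    exact key
end

section
/- Let Q = q_1•q_2•⋯•q_n be a generalized subsequence over Σ. For all words w1, w2 over Σ: |w1w2|_Q = Σ_{j=0}^{n} |w1|_{q_1•⋯•q_j} · |w2|_{q_{j+1}•⋯•q_n} + Σ_{j=1}^{n} Σ_{(u,v)} E^{w1}(q_1•⋯•q_{j−1}, u) · S^{w2}(v, q_{j+1}•⋯•q_n), where the inner sum ranges over all decompositions q_j = uv with u and v both nonempty, and where the empty sequence of factors (arising for j = 0, j = n, j = 1, or j = n in the respective places) is counted as having exactly one occurrence in every word. -/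
/-- Number of occurrences of the generalized subsequence with factor list `Q` in the word `w`.
The empty sequence of factors has exactly one occurrence in every word. -/
def gsCount {α : Type*} [DecidableEq α] : List (List α) → List α → ℕ
  | [], _ => 1
  | q :: Q, w =>
      ∑ i ∈ Finset.range (w.length + 1 - q.length),
        if (w.drop i).take q.length = q then gsCount Q (w.drop (i + q.length)) else 0

/-- Scattered-subword count `C(w, u)`: the number of occurrences of `u` as a
scattered subword (subsequence) of `w`. -/
def sCount {α : Type*} [DecidableEq α] : List α → List α → ℕ
  | _, [] => 1
  | [], _ :: _ => 0
  | a :: w, b :: u => sCount w (b :: u) + (if a = b then sCount w u else 0)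

/-- Suffix-anchored count E^w(P, u): the number of occurrences of the generalized
subsequence P•u in w whose last factor u ends exactly at the last position of w. -/
def eCount {α : Type*} [DecidableEq α] (w : List α) (P : List (List α)) (u : List α) : ℕ :=
  if u <:+ w then gsCount P (w.take (w.length - u.length)) else 0

/-- Prefix-anchored count S^w(u, P): the number of occurrences of the generalized
subsequence u•P in w whose first factor u starts exactly at the first position of w. -/
def sAnch {α : Type*} [DecidableEq α] (w : List α) (u : List α) (P : List (List α)) : ℕ :=
  if u <+: w then gsCount P (w.drop u.length) else 0

theorem gs_nil {α : Type*} [DecidableEq α] (q : List α) (hq : q ≠ []) (Q : List (List α)) :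
    gsCount (q :: Q) [] = 0 := by
  have := List.length_pos_iff.mpr hq
  rw [gsCount]
  have h : ([] : List α).length + 1 - q.length = 0 := by simp; omega
  rw [h]; simp

theorem gs_cons {α : Type*} [DecidableEq α] (q : List α) (hq : q ≠ []) (Q : List (List α))
    (a : α) (w : List α) :
    gsCount (q :: Q) (a :: w) = gsCount (q :: Q) w + sAnch (a :: w) q Q := by
  have hp := List.length_pos_iff.mpr hq
  rw [gsCount, gsCount, sAnch]
  by_cases hl : q.length ≤ w.length + 1
  · have h : (a :: w).length + 1 - q.length = (w.length + 1 - q.length) + 1 := by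
      simp; omega
    rw [h, Finset.sum_range_succ']
    congr 1
    · apply Finset.sum_congr rfl
      intro i _
      have : i + 1 + q.length = (i + q.length) + 1 := by omega
      rw [this]; simp
    · simp only [List.drop_zero, zero_add, List.prefix_iff_eq_take, eq_comm]
  · have h1 : (a :: w).length + 1 - q.length = 0 := by simp; omega
    have h2 : w.length + 1 - q.length = 0 := by omega
    rw [h1, h2, if_neg]
    · simp
    · intro h; have := h.length_le; simp at this; omega

theorem e_nil {α : Type*} [DecidableEq α] (P : List (List α)) (u : List α) (hu : u ≠ []) :
    eCount [] P u = 0 := by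
  simp [eCount, hu]

theorem e_app {α : Type*} [DecidableEq α] (P : List (List α)) (t u : List α) :
    eCount (t ++ u) P u = gsCount P t := by
  simp [eCount]

theorem e_zero {α : Type*} [DecidableEq α] (P : List (List α)) (w u : List α)
    (h : ¬ u <:+ w) : eCount w P u = 0 := by
  simp [eCount, h]

theorem e_cons {α : Type*} [DecidableEq α] (q : List α) (hq : q ≠ []) (P : List (List α))
    (a : α) (w u : List α) :
    eCount (a :: w) (q :: P) u = eCount w (q :: P) u +
      if q <+: a :: w then eCount ((a :: w).drop q.length) P u else 0 := by
  have hp := List.length_pos_iff.mpr hq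
  by_cases hs : u <:+ w
  · obtain ⟨t, rfl⟩ := hs
    rw [← List.cons_append, e_app, e_app, gs_cons q hq, sAnch]
    congr 1
    by_cases h : q <+: a :: t
    · rw [if_pos h, if_pos (h.trans (List.prefix_append _ _)),
        List.drop_append_of_le_length h.length_le, e_app]
    · rw [if_neg h]
      split_ifs with h'
      · rw [e_zero]
        intro hs
        have := hs.length_le
        apply h
        apply List.prefix_of_prefix_length_le h' (List.prefix_append _ _)
        have := h'.length_le
        simp at *
        omega
      · rfl
  · rw [e_zero _ w u hs]
    have : ¬ u <:+ (a :: w).drop q.length := by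
      intro h
      apply hs
      obtain ⟨m, hm⟩ : ∃ m, q.length = m + 1 := ⟨q.length - 1, by omega⟩
      rw [hm, List.drop_succ_cons] at h
      exact h.trans (List.drop_suffix _ _)
    rw [e_zero _ _ u this]
    by_cases h : u = a :: w
    · subst h
      have := e_app (q :: P) [] (a :: w)
      simp only [List.nil_append] at this
      rw [this, gs_nil q hq]; simp
    · rw [e_zero]
      · simp
      · rw [List.suffix_cons_iff]; tauto

theorem e_cons_nil {α : Type*} [DecidableEq α] (a : α) (w u : List α) :
    eCount (a :: w) [] u = eCount w [] u + if u = a :: w then 1 else 0 := by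
  simp only [eCount, gsCount, List.suffix_cons_iff]
  by_cases h : u = a :: w
  · have : ¬ u <:+ w := by
      intro h'; have := h'.length_le; subst h; simp at this
    simp [h]
    intro h'; have := h'.length_le; simp at this
  · simp [h]

theorem sAnch_app {α : Type*} [DecidableEq α] (q : List α) (Q : List (List α))
    (w1 w2 : List α) (hw : w1 ≠ []) :
    sAnch (w1 ++ w2) q Q = (if q <+: w1 then gsCount Q (w1.drop q.length ++ w2) else 0) +
      ∑ k ∈ Finset.Ico 1 q.length, (if q.take k = w1 then 1 else 0) * sAnch w2 (q.drop k) Q := by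
  have hp := List.length_pos_iff.mpr hw
  by_cases hl : q.length ≤ w1.length
  · rw [Finset.sum_eq_zero, add_zero, sAnch, List.drop_append_of_le_length hl]
    · have : q <+: w1 ++ w2 ↔ q <+: w1 :=
        ⟨fun h => List.prefix_of_prefix_length_le h (List.prefix_append _ _) hl,
          fun h => h.trans (List.prefix_append _ _)⟩
      simp only [this]
    · intro k hk
      rw [if_neg, zero_mul]
      intro h
      have := congrArg List.length h
      simp at this hk
      omega
  · rw [if_neg (fun h => hl h.length_le), zero_add,
      Finset.sum_eq_single_of_mem w1.length (by simp; omega)]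
    · by_cases h : q.take w1.length = w1
      · obtain ⟨v, rfl⟩ : ∃ v, q = w1 ++ v := ⟨q.drop w1.length, by
          conv_lhs => rw [← List.take_append_drop w1.length q, h]⟩
        simp [sAnch, List.prefix_append_right_inj]
      · rw [if_neg h, zero_mul, sAnch, if_neg]
        rintro ⟨t, ht⟩
        apply h
        have := congrArg (List.take w1.length) ht
        rw [List.take_append_of_le_length (by omega)] at this
        simpa using this
    · intro k hk hne
      rw [if_neg, zero_mul]
      intro h
      have := congrArg List.length h
      simp at this hk
      omega

theorem main_aux {α : Type*} [DecidableEq α]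
    (Q : List (List α)) (hQ' : ∀ q ∈ Q, q ≠ []) : ∀
    (w1 w2 : List α),
    gsCount Q (w1 ++ w2) =
      (∑ j ∈ Finset.range (Q.length + 1),
          gsCount (Q.take j) w1 * gsCount (Q.drop j) w2)
      + ∑ j ∈ Finset.range Q.length,
          ∑ k ∈ Finset.Ico 1 (Q.getD j []).length,
            eCount w1 (Q.take j) ((Q.getD j []).take k) *
              sAnch w2 ((Q.getD j []).drop k) (Q.drop (j + 1)) := by
  induction Q with
  | nil => intro w1 w2; simp [gsCount]
  | cons q Q ih =>
    have hq : q ≠ [] := hQ' q (by simp)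
    specialize ih (fun p hp => hQ' p (by simp [hp]))
    intro w1 w2
    rw [List.length_cons, Finset.sum_range_succ' _ Q.length, Finset.sum_range_succ' _ (Q.length + 1)]
    simp only [List.take_succ_cons, List.drop_succ_cons, List.getD_cons_succ, List.getD_cons_zero,
      List.take_zero, List.drop_zero]
    have g1 : ∀ w : List α, gsCount [] w = 1 := fun w => by rw [gsCount]
    induction w1 with
    | nil =>
      rw [Finset.sum_eq_zero, Finset.sum_eq_zero, Finset.sum_eq_zero]
      · simp [g1]
      · intro k hk
        rw [e_nil, zero_mul]
        simp at hk; simp [hq]; omega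
      · intro j _
        apply Finset.sum_eq_zero
        intro k hk
        rw [e_nil, zero_mul]
        simp only [Finset.mem_Ico] at hk
        intro h
        have := congrArg List.length h
        simp only [List.length_take, List.length_nil] at this
        omega
      · intro j _
        rw [gs_nil q hq, zero_mul]
    | cons a w ihw =>
      rw [List.cons_append, gs_cons q hq, ihw, ← List.cons_append, sAnch_app _ _ _ _ (by simp)]
      simp only [e_cons q hq, e_cons_nil, gs_cons q hq, g1, add_mul, Finset.sum_add_distrib]
      have key : (if q <+: a :: w then gsCount Q ((a :: w).drop q.length ++ w2) else 0) =
          (∑ j ∈ Finset.range (Q.length + 1), sAnch (a :: w) q (Q.take j) * gsCount (Q.drop j) w2)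
          + ∑ j ∈ Finset.range Q.length,
          ∑ k ∈ Finset.Ico 1 (Q.getD j []).length,
            (if q <+: a :: w then eCount ((a :: w).drop q.length) (Q.take j)
              ((Q.getD j []).take k) else 0) *
              sAnch w2 ((Q.getD j []).drop k) (Q.drop (j + 1)) := by
        by_cases h : q <+: a :: w
        · simp only [sAnch, if_pos h]
          rw [ih]
          simp only [sAnch]
        · simp [sAnch, if_neg h]
      rw [key]
      ring

theorem stmt4 {α : Type*} [Fintype α] [DecidableEq α]
    (Q : List (List α)) (hQ : Q ≠ []) (hQ' : ∀ q ∈ Q, q ≠ [])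
    (w1 w2 : List α) :
    gsCount Q (w1 ++ w2) =
      (∑ j ∈ Finset.range (Q.length + 1),
          gsCount (Q.take j) w1 * gsCount (Q.drop j) w2)
      + ∑ j ∈ Finset.range Q.length,
          ∑ k ∈ Finset.Ico 1 (Q.getD j []).length,
            eCount w1 (Q.take j) ((Q.getD j []).take k) *
              sAnch w2 ((Q.getD j []).drop k) (Q.drop (j + 1)) := by
  exact main_aux Q hQ' w1 w2
end

section
/- Let Q = q_1•⋯•q_n be a generalized subsequence over Σ with total length L = |q_1| + ⋯ + |q_n| ≥ 2. There exist a monoid homomorphism Ξ from (Σ*, concatenation) to the multiplicative monoid of 3(L−1) × 3(L−1) integer matrices, together with row indices r_1 < ⋯ < r_{n+1} and column indices c_1 < ⋯ < c_{n+1} (independent of the word), such that for every word w over Σ, the (n+1)×(n+1) submatrix of Ξ(w) with rows r_1, …, r_{n+1} and columns c_1, …, c_{n+1} is the upper unitriangular matrix M(w) with M(w)_{ii} = 1 for all i, M(w)_{i,j+1} = |w|_{q_i•⋯•q_j} for all 1 ≤ i ≤ j ≤ n, and all entries below the diagonal equal to 0. -/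
def encF {α : Type*} (q : List α) : List (Bool × α) :=
  match q with
  | [] => []
  | b :: s => (true, b) :: s.map (fun x => (false, x))

def encQ {α : Type*} : List (List α) → List (Bool × α)
  | [] => []
  | q :: Q => encF q ++ encQ Q

def bdy {α : Type*} : List (Bool × α) → Bool
  | [] => true
  | t :: _ => t.1

def runG {α : Type*} [DecidableEq α] (e : List (Bool × α)) (n : ℕ) : List α → ℤ
  | [] => if n = 0 then 1 else 0
  | a :: w => (if bdy e then runG e n w else 0) +
      (if 0 < n ∧ (e.head?).map Prod.snd = some a then runG e.tail (n - 1) w else 0)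

theorem encF_length {α : Type*} (q : List α) : (encF q).length = q.length := by
  cases q <;> simp [encF]

theorem encQ_length {α : Type*} (Q : List (List α)) :
    (encQ Q).length = (Q.map List.length).sum := by
  induction Q with
  | nil => rfl
  | cons q Q ih => simp [encQ, encF_length, ih]

theorem encQ_append {α : Type*} (P Q : List (List α)) : encQ (P ++ Q) = encQ P ++ encQ Q := by
  induction P with
  | nil => rfl
  | cons q P ih => simp [encQ, ih]

theorem bdy_encQ {α : Type*} (Q : List (List α)) (h : ∀ q ∈ Q, q ≠ []) : bdy (encQ Q) = true := by
  cases Q with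
  | nil => rfl
  | cons q Q =>
    cases q with
    | nil => simp at h
    | cons b s => rfl

theorem bdy_app {α : Type*} (Q : List (List α)) (h : ∀ q ∈ Q, q ≠ []) (r : List (Bool × α))
    (hr : bdy r = true) : bdy (encQ Q ++ r) = true := by
  cases Q with
  | nil => exact hr
  | cons q Q =>
    cases q with
    | nil => simp at h
    | cons b s => rfl

theorem runG_zero {α : Type*} [DecidableEq α] (e : List (Bool × α)) (he : bdy e = true)
    (w : List α) : runG e 0 w = 1 := by
  induction w with
  | nil => simp [runG]
  | cons a w ih => simp [runG, he, ih]

theorem runG_run {α : Type*} [DecidableEq α] (s : List α) (e : List (Bool × α)) (n : ℕ)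
    (w : List α) :
    runG (s.map (fun x => (false, x)) ++ e) (s.length + n) w =
      if w.take s.length = s then runG e n (w.drop s.length) else 0 := by
  induction s generalizing w with
  | nil => simp
  | cons b s ih =>
    cases w with
    | nil => simp [runG]
    | cons a w =>
      have h1 : s.length + 1 + n - 1 = s.length + n := by omega
      have h2 : 0 < s.length + 1 + n := by omega
      simp only [List.map_cons, List.cons_append, List.length_cons, runG, bdy, List.head?_cons,
        Option.map_some, List.tail_cons, h1, h2, ih, List.take_succ_cons, List.drop_succ_cons,
        List.cons.injEq, Option.some.injEq, true_and]
      by_cases hab : b = a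
      · simp [hab]
      · simp [hab, Ne.symm hab]

theorem gsCount_nil {α : Type*} [DecidableEq α] (q : List α) (hq : q ≠ []) (T : List (List α)) :
    gsCount (q :: T) [] = 0 := by
  cases q with
  | nil => simp at hq
  | cons b s => simp [gsCount]

theorem gsCount_cons {α : Type*} [DecidableEq α] (q : List α) (hq : q ≠ []) (T : List (List α))
    (a : α) (w : List α) :
    gsCount (q :: T) (a :: w) = gsCount (q :: T) w +
      if (a :: w).take q.length = q then gsCount T ((a :: w).drop q.length) else 0 := by
  by_cases hl : q.length ≤ w.length + 1
  · have e1 : (a :: w).length + 1 - q.length = (w.length + 1 - q.length) + 1 := by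
      simp; omega
    rw [gsCount, e1, Finset.sum_range_succ', gsCount]
    congr 1
    · apply Finset.sum_congr rfl
      intro i _
      rw [show i + 1 + q.length = (i + q.length) + 1 by omega]
      simp only [List.drop_succ_cons]
    · simp
  · have hne : ¬ ((a :: w).take q.length = q) := by
      intro h
      have := congrArg List.length h
      simp at this
      omega
    rw [if_neg hne]
    have e1 : (a :: w).length + 1 - q.length = 0 := by simp; omega
    have e2 : w.length + 1 - q.length = 0 := by omega
    rw [gsCount, gsCount, e1, e2]
    simp

theorem runG_main {α : Type*} [DecidableEq α] (T : List (List α)) (hT : ∀ q ∈ T, q ≠ [])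
    (r : List (Bool × α)) (hr : bdy r = true) (w : List α) :
    runG (encQ T ++ r) (encQ T).length w = (gsCount T w : ℤ) := by
  induction T generalizing w with
  | nil => simp [encQ, gsCount, runG_zero r hr]
  | cons q T ih =>
    have hq : q ≠ [] := hT q (by simp)
    have ih' := ih (fun p hp => hT p (by simp [hp]))
    induction w with
    | nil =>
      rw [gsCount_nil q hq]
      have : (encQ (q :: T)).length ≠ 0 := by
        have := List.length_pos_iff.2 hq
        simp only [encQ, List.length_append, encF_length]; omega
      simp only [runG, if_neg this, Nat.cast_zero]
    | cons a w ihw =>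
      rw [gsCount_cons q hq, runG, bdy_app _ hT r hr, ihw]
      cases q with
      | nil => simp at hq
      | cons b s =>
        have h1 : (encQ ((b :: s) :: T)).length = s.length + (encQ T).length + 1 := by
          simp [encQ, encF] <;> omega
        have h2 := runG_run s (encQ T ++ r) (encQ T).length w
        rw [ih'] at h2
        rw [h1]
        simp only [encQ, encF, List.cons_append, List.head?_cons, List.tail_cons,
          List.append_assoc, Nat.add_sub_cancel, h2, Option.map_some, Option.some.injEq,
          List.length_cons, List.take_succ_cons, List.drop_succ_cons, List.cons.injEq]
        by_cases hab : b = a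
        · simp [hab]
        · simp [hab, Ne.symm hab]

def letM {α : Type*} [DecidableEq α] (e : List (Bool × α)) (N : ℕ) (a : α) :
    Matrix (Fin N) (Fin N) ℤ := fun x y =>
  (if x = y then (if bdy (e.drop x) then 1 else 0) else 0) +
    (if (x : ℕ) + 1 = y then (if ((e.drop x).head?).map Prod.snd = some a then 1 else 0) else 0)

theorem letM_prod {α : Type*} [DecidableEq α] (e : List (Bool × α)) (N : ℕ)
    (w : List α) (x y : Fin N) :
    (w.map (letM e N)).prod x y =
      if x ≤ y then runG (e.drop x) ((y : ℕ) - x) w else 0 := by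
  induction w generalizing x with
  | nil =>
    simp only [List.map_nil, List.prod_nil, Matrix.one_apply, runG, Fin.ext_iff, Fin.le_def]
    split_ifs <;> first | rfl | omega
  | cons a w ih =>
    rw [List.map_cons, List.prod_cons, Matrix.mul_apply]
    simp only [letM, add_mul, Finset.sum_add_distrib, ite_mul, zero_mul, one_mul,
      Finset.sum_ite_eq, Finset.mem_univ, if_true]
    have key : (∑ z : Fin N, if (x : ℕ) + 1 = z then
        (if ((e.drop x).head?).map Prod.snd = some a then (w.map (letM e N)).prod z y else 0)
        else 0) = if (x : ℕ) + 1 ≤ y then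
          (if ((e.drop x).head?).map Prod.snd = some a then
            runG (e.drop (x + 1)) ((y : ℕ) - (x + 1)) w else 0) else 0 := by
      by_cases hx : (x : ℕ) + 1 < N
      · rw [Finset.sum_eq_single (⟨x + 1, hx⟩ : Fin N)]
        · rw [ih]
          simp only [if_true, Fin.le_def]
          split_ifs <;> rfl
        · intro z _ hz
          rw [if_neg]
          intro h
          exact hz (Fin.ext h.symm)
        · simp
      · rw [Finset.sum_eq_zero, if_neg]
        · have := y.2; omega
        · intro z _
          rw [if_neg]
          have := z.2; omega
    rw [key, ih]
    have h3 : (y : ℕ) - (x + 1) = (y : ℕ) - x - 1 := by omega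
    simp only [runG, List.tail_drop, h3, Fin.le_def]
    by_cases h1 : (x : ℕ) ≤ y
    · simp only [h1, if_true]
      congr 1
      by_cases h2 : (x : ℕ) + 1 ≤ y
      · have : 0 < (y : ℕ) - x := by omega
        simp [h2, this]
      · have : ¬ 0 < (y : ℕ) - x := by omega
        simp only [h2, this, if_false, false_and]
    · have h2 : ¬ (x : ℕ) + 1 ≤ y := by omega
      simp [h1, h2]

theorem encQ_take_lt {α : Type*} (Q : List (List α)) (hQ' : ∀ q ∈ Q, q ≠ []) (i j : ℕ)
    (hij : i < j) (hj : j ≤ Q.length) :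
    (encQ (Q.take i)).length < (encQ (Q.take j)).length := by
  have h : Q.take j = Q.take i ++ (Q.drop i).take (j - i) := by
    rw [← List.take_add]; congr 1; omega
  rw [h, encQ_append, List.length_append]
  have hi : i < Q.length := by omega
  have : 0 < (encQ ((Q.drop i).take (j - i))).length := by
    rw [List.drop_eq_getElem_cons hi, show j - i = (j - i - 1) + 1 by omega, List.take_succ_cons]
    have := List.length_pos_iff.2 (hQ' _ (List.getElem_mem hi))
    simp only [encQ, List.length_append, encF_length]; omega
  omega


theorem stmt5 {α : Type*} [Fintype α] [DecidableEq α]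
    (Q : List (List α)) (hQ : Q ≠ []) (hQ' : ∀ q ∈ Q, q ≠ [])
    (hL : 2 ≤ (Q.map List.length).sum) :
    ∃ (Ξ : List α →
          Matrix (Fin (3 * ((Q.map List.length).sum - 1)))
                 (Fin (3 * ((Q.map List.length).sum - 1))) ℤ)
      (r c : Fin (Q.length + 1) → Fin (3 * ((Q.map List.length).sum - 1))),
      (∀ w1 w2 : List α, Ξ (w1 ++ w2) = Ξ w1 * Ξ w2) ∧ Ξ [] = 1 ∧
      StrictMono r ∧ StrictMono c ∧
      ∀ (w : List α) (i j : Fin (Q.length + 1)),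
        Ξ w (r i) (c j) =
          if i = j then 1
          else if i < j then (gsCount ((Q.drop (i : ℕ)).take ((j : ℕ) - (i : ℕ))) w : ℤ)
          else 0 := by
  have hlen := encQ_length Q
  have hlt : ∀ i : Fin (Q.length + 1),
      (encQ (Q.take i)).length < 3 * ((Q.map List.length).sum - 1) := by
    intro i
    have h : encQ (Q.take i) ++ encQ (Q.drop i) = encQ Q := by
      rw [← encQ_append, List.take_append_drop]
    have := congrArg List.length h
    rw [List.length_append] at this
    omega
  have hmono : StrictMono (fun i : Fin (Q.length + 1) =>
      (⟨(encQ (Q.take i)).length, hlt i⟩ : Fin (3 * ((Q.map List.length).sum - 1)))) := by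
    intro i j hij
    exact encQ_take_lt Q hQ' i j hij (by have := j.2; omega)
  refine ⟨fun w => (w.map (letM (encQ Q) _)).prod, _, _, ?_, ?_, hmono, hmono, ?_⟩
  · intro w1 w2
    simp
  · simp
  · intro w i j
    dsimp only
    rw [letM_prod]
    by_cases hij : i ≤ j
    · rw [if_pos (hmono.monotone hij)]
      have hj : Q.take j = Q.take i ++ (Q.drop i).take (j - i) := by
        rw [← List.take_add]; congr 1
        have : (i : ℕ) ≤ j := hij
        omega
      have hQj : encQ Q = encQ (Q.take i) ++
          (encQ ((Q.drop i).take (j - i)) ++ encQ (Q.drop j)) := by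
        rw [← encQ_append, ← encQ_append, ← List.append_assoc, ← hj, List.take_append_drop]
      have hd : (encQ Q).drop (encQ (Q.take i)).length =
          encQ ((Q.drop i).take (j - i)) ++ encQ (Q.drop j) := by
        rw [hQj, List.drop_left]
      have hn : (encQ (Q.take j)).length - (encQ (Q.take i)).length =
          (encQ ((Q.drop i).take (j - i))).length := by
        rw [hj, encQ_append, List.length_append]; omega
      simp only [hd, hn]
      rw [runG_main _ (fun q hq => hQ' q (List.mem_of_mem_drop (List.mem_of_mem_take hq))) _
        (bdy_encQ _ (fun q hq => hQ' q (List.mem_of_mem_drop hq)))]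
      by_cases he : i = j
      · subst he
        simp [gsCount]
      · rw [if_neg he, if_pos (lt_of_le_of_ne hij he)]
    · have hji := not_le.1 hij
      rw [if_neg (not_le.2 (hmono hji)), if_neg (ne_of_gt hji), if_neg (not_lt.2 hji.le)]
end

section
/- Let Q = q_1•⋯•q_n be a generalized subsequence over Σ and let w be a word over Σ. Then there exists a word w' over an n-letter alphabet {a_1, …, a_n} such that for all 1 ≤ i ≤ j ≤ n, the scattered-subword count C(w', a_i a_{i+1} ⋯ a_j) equals |w|_{q_i•⋯•q_j}, the number of occurrences of q_i•⋯•q_j as a generalized subsequence of w. -/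
theorem gs_rec {α : Type*} [DecidableEq α] (q : List α) (hq : q ≠ []) (Q : List (List α))
    (v : List α) : gsCount (q :: Q) v = gsCount (q :: Q) (v.drop 1) +
      if v.take q.length = q then gsCount Q (v.drop q.length) else 0 := by
  have hl : 0 < q.length := List.length_pos_iff.mpr hq
  cases v with
  | nil =>
    have : ¬ ([] : List α) = q := fun h => hq h.symm
    simp [this]
  | cons a v =>
    by_cases h : q.length ≤ v.length + 1
    · have e : (a :: v).length + 1 - q.length = (v.length + 1 - q.length) + 1 := by
        simp only [List.length_cons]; omega
      simp only [gsCount]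
      rw [e, Finset.sum_range_succ']
      simp only [List.drop_succ_cons, List.drop_zero, zero_add]
      congr 1
      apply Finset.sum_congr rfl
      intro i _
      rw [show i + 1 + q.length = (i + q.length) + 1 by omega, List.drop_succ_cons]
    · have h1 : ¬ (a :: v).take q.length = q := by
        intro h2
        have := congrArg List.length h2
        simp at this
        omega
      have e1 : v.length + 1 + 1 - q.length = 0 := by omega
      have e2 : v.length + 1 - q.length = 0 := by omega
      rw [if_neg h1]
      simp [gsCount, e1, e2]

def rowW (P : ℕ → Prop) [DecidablePred P] : ℕ → ℕ → List ℕ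
  | 0, _ => []
  | d + 1, k => if P k then k :: rowW P d (k + 1) else rowW P d (k + 1)

theorem sCount_nil_right {α : Type*} [DecidableEq α] (w : List α) : sCount w [] = 1 := by
  cases w <;> rfl

theorem row_lemma (n : ℕ) (P : ℕ → Prop) [DecidablePred P] (W : List ℕ) (G0 G1 : ℕ → ℕ → ℕ)
    (hW : ∀ i m, i + m ≤ n → sCount W (List.range' i m) = G1 i m)
    (h0 : ∀ i, G0 i 0 = 1)
    (hG : ∀ i m, i + (m + 1) ≤ n → G0 i (m+1) = G1 i (m+1) + if P i then G0 (i+1) m else 0) :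
    ∀ d k, k + d = n → ∀ i m, i + m ≤ n →
      sCount (rowW P d k ++ W) (List.range' i m) = if k ≤ i then G0 i m else G1 i m := by
  have h1 : ∀ i, i ≤ n → G1 i 0 = 1 := fun i hi => by
    rw [← hW i 0 (by omega)]; simp [sCount_nil_right]
  intro d
  induction d with
  | zero =>
    intro k hk i m him
    simp only [rowW, List.nil_append]
    rw [hW i m him]
    split_ifs with h
    · obtain rfl : m = 0 := by omega
      rw [h0, h1 i (by omega)]
    · rfl
  | succ d ih =>
    intro k hk i m him
    have ih' := ih (k+1) (by omega)
    cases m with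
    | zero => simp [sCount_nil_right, h0, h1 i (by omega)]
    | succ m =>
      have a1 := ih' i (m+1) him
      have a2 := ih' (i+1) m (by omega)
      have a3 := hG i m him
      rw [List.range'_succ] at a1 ⊢
      simp only [rowW]
      by_cases hP : P k
      · rw [if_pos hP, List.cons_append, sCount, a1, a2]
        by_cases hki : k = i
        · subst hki
          simp [hP, a3]
        · by_cases k ≤ i
          · rw [if_pos (by omega), if_neg hki, if_pos (by omega)]; rfl
          · rw [if_neg (by omega), if_neg hki, if_neg (by omega)]; rfl
      · rw [if_neg hP, a1]
        by_cases hki : k = i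
        · subst hki
          simp [hP, a3]
        · by_cases k ≤ i
          · rw [if_pos (by omega), if_pos (by omega)]
          · rw [if_neg (by omega), if_neg (by omega)]

theorem row_lt (P : ℕ → Prop) [DecidablePred P] : ∀ d k, ∀ x ∈ rowW P d k, x < k + d := by
  intro d
  induction d with
  | zero => intro k x hx; simp [rowW] at hx
  | succ d ih =>
    intro k x hx
    simp only [rowW] at hx
    have := ih (k+1) x
    split_ifs at hx
    · rcases List.mem_cons.1 hx with rfl | h
      · omega
      · have := this h; omega
    · have := this hx; omega

theorem nat_version {α : Type*} [DecidableEq α] (n : ℕ) (q : ℕ → List α)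
    (hq : ∀ k < n, q k ≠ []) (w : List α) :
    ∃ W : List ℕ, (∀ x ∈ W, x < n) ∧ ∀ i m, i + m ≤ n →
      sCount W (List.range' i m) = gsCount ((List.range' i m).map q) w := by
  let S : ℕ → ℕ := fun k => ∑ j ∈ Finset.range k, (q j).length
  let T := S n
  have hS : ∀ k ≤ n, S k ≤ T := fun k hk =>
    Finset.sum_le_sum_of_subset (Finset.range_subset_range.2 hk)
  let G : ℕ → ℕ → ℕ → ℕ := fun t i m =>
    gsCount ((List.range' i m).map q) (w.drop (t + S i - T))
  have key : ∀ f t, t + f = T + w.length → ∃ W : List ℕ, (∀ x ∈ W, x < n) ∧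
      ∀ i m, i + m ≤ n → sCount W (List.range' i m) = G t i m := by
    intro f
    induction f with
    | zero =>
      intro t ht
      refine ⟨[], by simp, ?_⟩
      intro i m him
      cases m with
      | zero => simp [G, sCount, gsCount]
      | succ m =>
        have hl : 0 < (q i).length := List.length_pos_iff.mpr (hq i (by omega))
        have e : w.drop (t + S i - T) = [] := List.drop_eq_nil_of_le (by omega)
        have e2 : 1 - (q i).length = 0 := by omega
        simp only [G, e, List.range'_succ, sCount, List.map_cons, gsCount]
        simp [e2]
    | succ f ih =>
      intro t ht
      obtain ⟨W, hW, hW2⟩ := ih (t+1) (by omega)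
      let P : ℕ → Prop := fun k => T ≤ t + S k ∧
        (w.drop (t + S k - T)).take (q k).length = q k
      refine ⟨rowW P n 0 ++ W, ?_, ?_⟩
      · intro x hx
        rcases List.mem_append.1 hx with h | h
        · simpa using row_lt P n 0 x h
        · exact hW x h
      · intro i m him
        have := row_lemma n P W (G t) (G (t+1)) hW2 (by intro i; simp [G, gsCount]) ?_ n 0
          (by omega) i m him
        · simpa using this
        · intro i m him
          have hs : S (i+1) = S i + (q i).length := Finset.sum_range_succ _ _
          simp only [G, List.range'_succ, List.map_cons]
          by_cases hT : T ≤ t + S i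
          · rw [gs_rec _ (hq i (by omega))]
            simp only [List.drop_drop, P, hT, true_and, hs]
            rw [show t + 1 + S i - T = t + S i - T + 1 by omega,
              show t + (S i + (q i).length) - T = t + S i - T + (q i).length by omega]
          · rw [if_neg (fun h => hT h.1), show t + 1 + S i - T = t + S i - T by omega, add_zero]
  obtain ⟨W, h1, h2⟩ := key (T + w.length) 0 (by omega)
  refine ⟨W, h1, fun i m him => ?_⟩
  rw [h2 i m him]
  have := hS i (by omega)
  simp only [G]
  rw [show 0 + S i - T = 0 by omega, List.drop_zero]

theorem sCount_map {α β : Type*} [DecidableEq α] [DecidableEq β] (f : α → β)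
    (hf : Function.Injective f) : ∀ (w u : List α), sCount (w.map f) (u.map f) = sCount w u := by
  intro w
  induction w with
  | nil => intro u; cases u <;> rfl
  | cons a w ih =>
    intro u
    cases u with
    | nil => rfl
    | cons b u =>
      have := ih (b :: u)
      simp only [List.map_cons] at this
      simp only [List.map_cons, sCount, this, ih u, hf.eq_iff]

theorem filter_range (n i j : ℕ) (hij : i ≤ j) (hj : j < n) :
    (List.range n).filter (fun t => i ≤ t ∧ t ≤ j) = List.range' i (j - i + 1) := by
  apply List.Perm.eq_of_pairwise (le := (· < ·))
  · intro a b _ _ h1 h2; omega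
  · exact List.Pairwise.filter _ List.pairwise_lt_range
  · exact List.pairwise_lt_range'
  · rw [List.perm_ext_iff_of_nodup (List.nodup_range.filter _) List.nodup_range']
    intro a
    simp [List.mem_range'_1]
    omega

theorem stmt7 {α : Type*} [Fintype α] [DecidableEq α]
    (Q : List (List α)) (hQ : Q ≠ []) (hQ' : ∀ q ∈ Q, q ≠ [])
    (w : List α) :
    ∃ w' : List (Fin Q.length),
      ∀ i j : Fin Q.length, i ≤ j →
        sCount w' ((List.finRange Q.length).filter fun t => i ≤ t ∧ t ≤ j) =
          gsCount ((Q.drop (i : ℕ)).take ((j : ℕ) - (i : ℕ) + 1)) w := by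
  obtain ⟨W, h1, h2⟩ := nat_version Q.length (fun k => Q.getD k [])
    (fun k hk => by
      rw [List.getD_eq_getElem _ _ hk]
      exact hQ' _ (List.getElem_mem hk)) w
  refine ⟨W.pmap (fun x hx => ⟨x, hx⟩) h1, fun i j hij => ?_⟩
  have hj := j.2
  have hij' : (i : ℕ) ≤ j := hij
  rw [← sCount_map Fin.val Fin.val_injective]
  have e1 : (W.pmap (fun x hx => (⟨x, hx⟩ : Fin Q.length)) h1).map Fin.val = W := by
    simp [List.map_pmap]
  have e2 : ((List.finRange Q.length).filter fun t => i ≤ t ∧ t ≤ j).map Fin.val =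
      List.range' i ((j : ℕ) - i + 1) := by
    rw [← filter_range Q.length i j hij' hj, ← List.map_coe_finRange_eq_range, List.filter_map]
    rfl
  rw [e1, e2, h2 _ _ (by omega)]
  congr 1
  apply List.ext_getElem
  · simp; omega
  · intro k hk1 hk2
    simp at hk1
    simp [List.getElem?_eq_getElem (show (i : ℕ) + k < Q.length by omega)]
end

section
/- Let Q_1 and Q_2 be generalized subsequences over Σ. Then there exist finitely many generalized subsequences P_1, …, P_r over Σ and positive integers c_1, …, c_r such that for every word w over Σ: |w|_{Q_1} · |w|_{Q_2} = Σ_{i=1}^{r} c_i · |w|_{P_i}; moreover, each P_i can be chosen with total length (the sum of the lengths of its factors) at most the total length of Q_1 plus the total length of Q_2. -/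
namespace GS
set_option linter.unusedSectionVars false
variable {α : Type*} [DecidableEq α]

def an (p : List α) (P : List (List α)) (w : List α) : ℕ :=
  if w.take p.length = p then gsCount P (w.drop p.length) else 0

def sh (a : α) (f : List α → ℕ) : List α → ℕ
  | [] => 0
  | b :: w => if b = a then f w else 0

def tl (f : List α → ℕ) : List α → ℕ
  | [] => 0
  | _ :: w => f w

def sm (f : List α → ℕ) : List α → ℕ
  | [] => f []
  | a :: w => f (a :: w) + sm f w

def tot (P : List (List α)) : ℕ := (P.map List.length).sum

def good (P : List (List α)) : Prop := ∀ q ∈ P, q ≠ []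

def K (n : ℕ) : AddSubmonoid (List α → ℕ) :=
  AddSubmonoid.closure {f | ∃ r R, good R ∧ r.length + tot R ≤ n ∧ f = an r R}

def Kp (n : ℕ) : AddSubmonoid (List α → ℕ) :=
  AddSubmonoid.closure {f | ∃ r R, r ≠ [] ∧ good R ∧ r.length + tot R ≤ n ∧ f = an r R}

def G (n : ℕ) : AddSubmonoid (List α → ℕ) :=
  AddSubmonoid.closure {f | ∃ R, R ≠ [] ∧ good R ∧ tot R ≤ n ∧ f = gsCount R}

theorem an_nil (P : List (List α)) : an [] P = gsCount P := by
  funext w; simp [an]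

theorem an_cons (a : α) (p : List α) (P : List (List α)) : an (a :: p) P = sh a (an p P) := by
  funext w
  cases w with
  | nil => simp [an, sh]
  | cons b w =>
    simp only [an, sh, List.length_cons, List.take_succ_cons, List.drop_succ_cons, List.cons.injEq]
    by_cases h : b = a <;> simp [h]

theorem gs_eq (q : List α) (Q : List (List α)) (hq : q ≠ []) :
    gsCount (q :: Q) = sm (an q Q) := by
  have hl : 0 < q.length := List.length_pos_of_ne_nil hq
  funext w
  induction w with
  | nil =>
    have h0 : 0 + 1 - q.length = 0 := by omega
    simp [gsCount, sm, an, h0, hq.symm]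
  | cons a w ih =>
    rw [sm, ← ih]
    simp only [gsCount, an]
    by_cases h : q.length ≤ w.length + 1
    · have h0 : (a :: w).length + 1 - q.length = (w.length + 1 - q.length) + 1 := by
        simp; omega
      rw [h0, Finset.sum_range_succ']
      rw [add_comm]
      congr 1
      · simp
      · apply Finset.sum_congr rfl
        intro i _
        have : i + 1 + q.length = (i + q.length) + 1 := by omega
        rw [this]
        simp
    · have h0 : (a :: w).length + 1 - q.length = 0 := by simp; omega
      have h1 : w.length + 1 - q.length = 0 := by omega
      have h2 : (a :: w).take q.length ≠ q := by
        intro h3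
        have := congrArg List.length h3
        simp at this
        omega
      rw [h0, h1, if_neg h2]; simp

theorem sm_mul (f g : List α → ℕ) :
    sm f * sm g = sm (f * g + f * tl (sm g) + tl (sm f) * g) := by
  funext w
  induction w with
  | nil => simp [sm, tl]
  | cons a w ih =>
    simp only [Pi.mul_apply] at ih
    simp only [Pi.mul_apply, Pi.add_apply, sm, tl, ← ih]
    ring

theorem sm_split (f : List α → ℕ) : sm f = f + tl (sm f) := by
  funext w; cases w <;> simp [sm, tl]

theorem sm_zero : sm (0 : List α → ℕ) = 0 := by
  funext w; induction w <;> simp_all [sm]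

theorem sm_add (f g : List α → ℕ) : sm (f + g) = sm f + sm g := by
  funext w; induction w with
  | nil => simp [sm]
  | cons a w ih => simp only [sm, ih, Pi.add_apply]; ring

theorem sh_mul (a b : α) (f g : List α → ℕ) :
    sh a f * sh b g = if a = b then sh a (f * g) else 0 := by
  split_ifs with h
  · subst h; funext w; cases w with
    | nil => simp [sh]
    | cons c w => by_cases h1 : c = a <;> simp [sh, h1]
  · funext w; cases w with
    | nil => simp [sh]
    | cons c w =>
      simp only [Pi.mul_apply, sh, Pi.zero_apply]
      by_cases h1 : c = a
      · subst h1; simp [h]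
      · simp [h1]

theorem sh_tl (a : α) (f g : List α → ℕ) : sh a f * tl g = sh a (f * g) := by
  funext w; cases w <;> simp [sh, tl]

theorem sh_mem (a : α) {n : ℕ} {f : List α → ℕ} (hf : f ∈ K n) : sh a f ∈ Kp (n + 1) := by
  induction hf using AddSubmonoid.closure_induction with
  | mem f hf =>
    obtain ⟨r, R, h1, h2, rfl⟩ := hf
    refine AddSubmonoid.subset_closure ⟨a :: r, R, by simp, h1, ?_, (an_cons ..).symm⟩
    simp; omega
  | zero =>
    have : sh a (0 : List α → ℕ) = 0 := by funext w; cases w <;> simp [sh]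
    rw [this]; exact zero_mem _
  | add f g _ _ h1 h2 =>
    have : sh a (f + g) = sh a f + sh a g := by
      funext w; cases w with
      | nil => simp [sh]
      | cons b w => by_cases h : b = a <;> simp [sh, h]
    rw [this]; exact add_mem h1 h2

theorem sm_mem {n : ℕ} {f : List α → ℕ} (hf : f ∈ Kp n) : sm f ∈ G n := by
  induction hf using AddSubmonoid.closure_induction with
  | mem f hf =>
    obtain ⟨r, R, h0, h1, h2, rfl⟩ := hf
    refine AddSubmonoid.subset_closure ⟨r :: R, by simp, ?_, ?_, (gs_eq r R h0).symm⟩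
    · intro q hq
      rcases List.mem_cons.1 hq with rfl | h
      · exact h0
      · exact h1 q h
    · simpa [tot] using h2
  | zero => rw [sm_zero]; exact zero_mem _
  | add f g _ _ h1 h2 => rw [sm_add]; exact add_mem h1 h2

theorem Kp_le (n : ℕ) : (Kp n : AddSubmonoid (List α → ℕ)) ≤ K n := by
  apply AddSubmonoid.closure_mono
  rintro f ⟨r, R, _, h⟩
  exact ⟨r, R, h⟩

theorem G_le (n : ℕ) : (G n : AddSubmonoid (List α → ℕ)) ≤ K n := by
  apply AddSubmonoid.closure_mono
  rintro f ⟨R, _, h1, h2, rfl⟩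
  exact ⟨[], R, h1, by simpa using h2, (an_nil R).symm⟩

theorem Kp_mono {m n : ℕ} (h : m ≤ n) : (Kp m : AddSubmonoid (List α → ℕ)) ≤ Kp n := by
  apply AddSubmonoid.closure_mono
  rintro f ⟨r, R, h0, h1, h2, rfl⟩
  exact ⟨r, R, h0, h1, h2.trans h, rfl⟩

theorem K_mono {m n : ℕ} (h : m ≤ n) : (K m : AddSubmonoid (List α → ℕ)) ≤ K n := by
  apply AddSubmonoid.closure_mono
  rintro f ⟨r, R, h1, h2, rfl⟩
  exact ⟨r, R, h1, h2.trans h, rfl⟩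

/-- All products of total length at most `n` are in the span. -/
def C (α : Type*) [DecidableEq α] (n : ℕ) : Prop :=
  ∀ (p q : List α) (P Q : List (List α)), good P → good Q →
    p.length + tot P + (q.length + tot Q) ≤ n → an p P * an q Q ∈ K n

theorem both {n : ℕ} (ih : ∀ m < n, C α m) (p q : List α) (P Q : List (List α))
    (hP : good P) (hQ : good Q) (hp : p ≠ []) (hq : q ≠ [])
    (h : p.length + tot P + (q.length + tot Q) ≤ n) : an p P * an q Q ∈ Kp n := by
  obtain ⟨a, p, rfl⟩ := List.exists_cons_of_ne_nil hp
  obtain ⟨b, q, rfl⟩ := List.exists_cons_of_ne_nil hq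
  simp only [List.length_cons] at h
  rw [an_cons, an_cons, sh_mul]
  split_ifs
  · obtain ⟨m, rfl⟩ : ∃ m, n = m + 1 := ⟨n - 1, by omega⟩
    exact sh_mem a (ih m (by omega) p q P Q hP hQ (by omega))
  · exact zero_mem _

theorem shifted {n : ℕ} (ih : ∀ m < n, C α m) (p : List α) (P Q : List (List α))
    (hP : good P) (hQ : good Q) (hp : p ≠ [])
    (h : p.length + tot P + tot Q ≤ n) : an p P * tl (gsCount Q) ∈ Kp n := by
  obtain ⟨a, p, rfl⟩ := List.exists_cons_of_ne_nil hp
  simp only [List.length_cons] at h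
  rw [an_cons, sh_tl, ← an_nil Q]
  obtain ⟨m, rfl⟩ : ∃ m, n = m + 1 := ⟨n - 1, by omega⟩
  exact sh_mem a (ih m (by omega) p [] P Q hP hQ (by simp; omega))

theorem good_cons {q : List α} {Q : List (List α)} (h : good (q :: Q)) : q ≠ [] ∧ good Q :=
  ⟨h q (by simp), fun r hr => h r (by simp [hr])⟩

theorem tot_cons (q : List α) (Q : List (List α)) : tot (q :: Q) = q.length + tot Q := by
  simp [tot]

theorem gs_nil : gsCount ([] : List (List α)) = 1 := by
  funext w; simp [gsCount]

theorem one {n : ℕ} (ih : ∀ m < n, C α m) (p : List α) (P Q : List (List α))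
    (hP : good P) (hQ : good Q) (hp : p ≠ [])
    (h : p.length + tot P + tot Q ≤ n) : an p P * gsCount Q ∈ Kp n := by
  cases Q with
  | nil =>
    rw [gs_nil, mul_one]
    exact AddSubmonoid.subset_closure ⟨p, P, hp, hP, by omega, rfl⟩
  | cons q Q =>
    obtain ⟨h1, h2⟩ := good_cons hQ
    rw [gs_eq q Q h1, sm_split, mul_add, ← gs_eq q Q h1]
    refine add_mem (both ih p q P Q hP h2 hp h1 ?_) (shifted ih p P _ hP hQ hp h)
    rw [tot_cons] at h; exact h

theorem neither {n : ℕ} (ih : ∀ m < n, C α m) (P Q : List (List α))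
    (hP : good P) (hQ : good Q) (hP0 : P ≠ []) (hQ0 : Q ≠ [])
    (h : tot P + tot Q ≤ n) : gsCount P * gsCount Q ∈ G n := by
  obtain ⟨p, P, rfl⟩ := List.exists_cons_of_ne_nil hP0
  obtain ⟨q, Q, rfl⟩ := List.exists_cons_of_ne_nil hQ0
  obtain ⟨h1, h2⟩ := good_cons hP
  obtain ⟨h3, h4⟩ := good_cons hQ
  rw [gs_eq q Q h3, gs_eq p P h1, sm_mul, ← gs_eq q Q h3, ← gs_eq p P h1]
  rw [mul_comm (tl _)]
  refine sm_mem (add_mem (add_mem (both ih p q P Q h2 h4 h1 h3 ?_)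
    (shifted ih p P _ h2 hQ h1 ?_)) (shifted ih q Q _ h4 hP h3 ?_)) <;>
  · simp only [tot_cons] at *; omega

theorem C_all (n : ℕ) : C α n := by
  induction n using Nat.strong_induction_on with
  | _ n ih =>
    intro p q P Q hP hQ h
    by_cases hp : p = []
    · subst hp
      by_cases hq : q = []
      · subst hq
        simp only [List.length_nil, zero_add] at h
        rw [an_nil, an_nil]
        by_cases hP0 : P = []
        · subst hP0
          rw [gs_nil, one_mul]
          exact AddSubmonoid.subset_closure ⟨[], Q, hQ, by simp; omega, (an_nil Q).symm⟩
        by_cases hQ0 : Q = []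
        · subst hQ0
          rw [gs_nil, mul_one]
          exact AddSubmonoid.subset_closure ⟨[], P, hP, by simp; omega, (an_nil P).symm⟩
        exact G_le n (neither ih P Q hP hQ hP0 hQ0 h)
      · rw [an_nil, mul_comm]
        simp only [List.length_nil, zero_add] at h
        exact Kp_le n (one ih q Q P hQ hP hq (by omega))
    · by_cases hq : q = []
      · subst hq
        rw [an_nil]
        simp only [List.length_nil, zero_add] at h
        exact Kp_le n (one ih p P Q hP hQ hp h)
      · exact Kp_le n (both ih p q P Q hP hQ hp hq h)

end GS

theorem stmt12 {α : Type*} [Fintype α] [DecidableEq α]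
    (Q1 Q2 : List (List α))
    (h1 : Q1 ≠ []) (h1' : ∀ q ∈ Q1, q ≠ [])
    (h2 : Q2 ≠ []) (h2' : ∀ q ∈ Q2, q ≠ []) :
    ∃ (r : ℕ) (c : Fin r → ℕ) (P : Fin r → List (List α)),
      (∀ i, 0 < c i) ∧
      (∀ i, P i ≠ [] ∧ ∀ q ∈ P i, q ≠ []) ∧
      (∀ i, ((P i).map List.length).sum ≤
        (Q1.map List.length).sum + (Q2.map List.length).sum) ∧
      ∀ w : List α,
        gsCount Q1 w * gsCount Q2 w = ∑ i, c i * gsCount (P i) w := by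
  have key := GS.neither (fun m _ => GS.C_all m) Q1 Q2 h1' h2' h1 h2 le_rfl
  obtain ⟨l, hl, hs⟩ := AddSubmonoid.exists_list_of_mem_closure key
  have hl' : ∀ i : Fin l.length, ∃ R, R ≠ [] ∧ GS.good R ∧
      GS.tot R ≤ GS.tot Q1 + GS.tot Q2 ∧ l[i] = gsCount R :=
    fun i => hl _ (List.getElem_mem _)
  choose P hP0 hP1 hP2 hP3 using hl'
  refine ⟨l.length, fun _ => 1, P, by simp, fun i => ⟨hP0 i, hP1 i⟩, hP2, fun w => ?_⟩
  have h := congrFun hs w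
  rw [Pi.mul_apply] at h
  rw [← h, ← Fin.sum_univ_getElem, Finset.sum_apply]
  refine Finset.sum_congr rfl fun i _ => ?_
  rw [one_mul, ← hP3 i]; rfl
end

section
/- Every generalized subword history over Σ is equivalent to a linear one: for every generalized subword history G over Σ there exist an integer r ≥ 0, integers c_1, …, c_r, and generalized subsequences P_1, …, P_r over Σ such that for every word w over Σ, the value of G in w equals Σ_{i=1}^{r} c_i · |w|_{P_i}. -/
/-- Generalized subword histories over the alphabet α: monomials are (factor lists of)
generalized subsequences, combined with negation, addition and multiplication. -/
inductive GSH (α : Type*) where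
  | mono : List (List α) → GSH α
  | neg : GSH α → GSH α
  | add : GSH α → GSH α → GSH α
  | mul : GSH α → GSH α → GSH α

/-- The value of a generalized subword history in a word. -/
def GSH.value {α : Type*} [DecidableEq α] : GSH α → List α → ℤ
  | mono Q, w => gsCount Q w
  | neg G, w => -(G.value w)
  | add G1 G2, w => G1.value w + G2.value w
  | mul G1 G2, w => G1.value w * G2.value w

/-- Well-formedness: every monomial is a genuine generalized subsequence, i.e. a nonempty
sequence of nonempty factors. -/
def GSH.WF {α : Type*} : GSH α → Prop
  | mono Q => Q ≠ [] ∧ ∀ q ∈ Q, q ≠ []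
  | neg G => G.WF
  | add G1 G2 => G1.WF ∧ G2.WF
  | mul G1 G2 => G1.WF ∧ G2.WF

namespace GSHProof

variable {α : Type*} [DecidableEq α]

def Hl (a : α) : (List α → ℤ) →ₗ[ℤ] (List α → ℤ) where
  toFun f := fun w => match w with
    | [] => 0
    | b :: w => if b = a then f w else 0
  map_add' f g := by
    funext w
    cases w with
    | nil => simp
    | cons b w => by_cases h : b = a <;> simp [h]
  map_smul' c f := by
    funext w
    cases w with
    | nil => simp
    | cons b w => by_cases h : b = a <;> simp [h]

def Sfun (f : List α → ℤ) : List α → ℤ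
  | [] => f []
  | a :: w => f (a :: w) + Sfun f w

def Sl : (List α → ℤ) →ₗ[ℤ] (List α → ℤ) where
  toFun f := Sfun f
  map_add' f g := by
    funext w
    induction w with
    | nil => simp [Sfun]
    | cons b w ih => simp only [Sfun, ih, Pi.add_apply]; ring
  map_smul' c f := by
    funext w
    induction w with
    | nil => simp [Sfun]
    | cons b w ih =>
      simp only [Sfun, ih, Pi.smul_apply, smul_eq_mul, RingHom.id_apply]; ring

def F (Q : List (List α)) : List α → ℤ := fun w => (gsCount Q w : ℤ)

def T : List α → List (List α) → List α → ℤ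
  | [], Q => F Q
  | a :: q, Q => Hl a (T q Q)

lemma T_apply (q : List α) (Q : List (List α)) (w : List α) :
    T q Q w = if w.take q.length = q then (gsCount Q (w.drop q.length) : ℤ) else 0 := by
  induction q generalizing w with
  | nil => simp [T, F]
  | cons a q ih =>
    cases w with
    | nil => simp [T, Hl]
    | cons b w =>
      by_cases h : b = a <;> simp [T, Hl, h, ih]

lemma gs_cons (q : List α) (hq : q ≠ []) (Q : List (List α)) (a : α) (w : List α) :
    F (q :: Q) (a :: w) = T q Q (a :: w) + F (q :: Q) w := by
  rw [T_apply]
  unfold F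
  have hlen : 0 < q.length := List.length_pos_iff.2 hq
  by_cases h : q.length ≤ w.length + 1
  · rw [gsCount, gsCount]
    have e : (a :: w).length + 1 - q.length = (w.length + 1 - q.length) + 1 := by
      simp; omega
    rw [e, Finset.sum_range_succ']
    have e2 : ∀ i, i + 1 + q.length = (i + q.length) + 1 := by intro i; omega
    simp only [e2, List.drop_succ_cons, List.drop_zero, Nat.zero_add]
    push_cast
    ring
  · have h1 : (a :: w).length + 1 - q.length = 0 := by simp; omega
    have h2 : w.length + 1 - q.length = 0 := by omega
    have h3 : ¬ (a :: w).take q.length = q := by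
      intro h'
      have := congrArg List.length h'
      simp at this
      omega
    rw [gsCount, gsCount, h1, h2, if_neg h3]
    simp

lemma F_cons (q : List α) (hq : q ≠ []) (Q : List (List α)) : F (q :: Q) = Sl (T q Q) := by
  funext w
  induction w with
  | nil =>
    have hlen : 0 < q.length := List.length_pos_iff.2 hq
    have h : ([] : List α).length + 1 - q.length = 0 := by simp; omega
    show ((gsCount (q :: Q) [] : ℕ) : ℤ) = T q Q []
    rw [T_apply, gsCount, h]
    simp [hq.symm]
  | cons a w ih =>
    rw [gs_cons q hq, ih]; rfl

lemma S_mul (f g : List α → ℤ) :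
    Sl f * Sl g = Sl (f * Sl g + g * Sl f - f * g) := by
  funext w
  show Sfun f w * Sfun g w = Sfun (f * Sfun g + g * Sfun f - f * g) w
  induction w with
  | nil => simp [Sfun]; ring
  | cons a w ih =>
    simp only [Sfun, ← ih, Pi.add_apply, Pi.sub_apply, Pi.mul_apply]; ring

lemma H_mul_S (a : α) (f g : List α → ℤ) :
    Hl a f * Sl g = Hl a f * g + Hl a (f * Sl g) := by
  funext w
  cases w with
  | nil => simp [Hl]
  | cons b w =>
    by_cases h : b = a <;> simp [Hl, h, Sl, Sfun]
    ring

lemma H_mul_H (a b : α) (f g : List α → ℤ) :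
    Hl a f * Hl b g = if a = b then Hl a (f * g) else 0 := by
  funext w
  cases w with
  | nil => by_cases h : a = b <;> simp [Hl, h]
  | cons c w =>
    by_cases h : a = b
    · subst h
      by_cases h' : c = a <;> simp [Hl, h']
    · by_cases h' : c = a
      · subst h'; simp [Hl, h]
      · simp [Hl, h, h']

def WFl (Q : List (List α)) : Prop := ∀ q ∈ Q, q ≠ []

variable (α) in
def A0 : Submodule ℤ (List α → ℤ) := Submodule.span ℤ {f | ∃ Q, (Q ≠ [] ∧ WFl Q) ∧ F Q = f}

variable (α) in
def B : Submodule ℤ (List α → ℤ) := Submodule.span ℤ {f | ∃ q Q, WFl Q ∧ T q Q = f}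

variable (α) in
def B0 : Submodule ℤ (List α → ℤ) :=
  Submodule.span ℤ {f | ∃ q Q, q ≠ [] ∧ WFl Q ∧ T q Q = f}

lemma B0_le : B0 α ≤ B α :=
  Submodule.span_mono (by rintro f ⟨q, Q, _, h, e⟩; exact ⟨q, Q, h, e⟩)

lemma A0_le : A0 α ≤ B α :=
  Submodule.span_mono (by rintro f ⟨Q, h, e⟩; exact ⟨[], Q, h.2, e⟩)

lemma H_mem (a : α) {f : List α → ℤ} (hf : f ∈ B α) : Hl a f ∈ B0 α := by
  have : B α ≤ (B0 α).comap (Hl a) := by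
    refine Submodule.span_le.2 ?_
    rintro f ⟨q, Q, h, rfl⟩
    exact Submodule.subset_span ⟨a :: q, Q, by simp, h, rfl⟩
  exact this hf

lemma S_mem {f : List α → ℤ} (hf : f ∈ B0 α) : Sl f ∈ A0 α := by
  have : B0 α ≤ (A0 α).comap Sl := by
    refine Submodule.span_le.2 ?_
    rintro f ⟨q, Q, hq, h, rfl⟩
    refine Submodule.subset_span ⟨q :: Q, ⟨by simp, ?_⟩, F_cons q hq Q⟩
    intro x hx
    rcases List.mem_cons.1 hx with rfl | hx
    · exact hq
    · exact h x hx
  exact this hf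

def sz (q : List α) (Q : List (List α)) : ℕ := q.length + Q.flatten.length

def IH (n : ℕ) : Prop := ∀ (q : List α) (Q : List (List α)) (p : List α) (P : List (List α)),
  WFl Q → WFl P → sz q Q + sz p P < n → T q Q * T p P ∈ B α

lemma F_nil : F ([] : List (List α)) = 1 := by
  funext w; simp [F, gsCount]

lemma TT {n : ℕ} (ih : IH (α := α) n) (q Q p P) (hq : q ≠ []) (hp : p ≠ [])
    (hQ : WFl Q) (hP : WFl P) (h : sz q Q + sz p P ≤ n) : T q Q * T p P ∈ B0 α := by
  obtain ⟨a, q, rfl⟩ := List.exists_cons_of_ne_nil hq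
  obtain ⟨b, p, rfl⟩ := List.exists_cons_of_ne_nil hp
  rw [T, T, H_mul_H]
  split_ifs
  · refine H_mem a (ih _ _ _ _ hQ hP ?_)
    simp [sz] at h ⊢; omega
  · exact Submodule.zero_mem _

lemma TF {n : ℕ} (ih : IH (α := α) n) (q Q P) (hq : q ≠ [])
    (hQ : WFl Q) (hP : WFl P) (h : sz q Q + sz [] P ≤ n) : T q Q * F P ∈ B0 α := by
  cases P with
  | nil =>
    rw [F_nil, mul_one]
    exact Submodule.subset_span ⟨q, Q, hq, hQ, rfl⟩
  | cons p P =>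
    have hp : p ≠ [] := hP p (by simp)
    have hP' : WFl P := fun x hx => hP x (by simp [hx])
    have h1 := TT ih q Q p P hq hp hQ hP' (by simp [sz] at h ⊢; omega)
    obtain ⟨a, q, rfl⟩ := List.exists_cons_of_ne_nil hq
    have h2 : T q Q * T [] (p :: P) ∈ B α := ih _ _ _ _ hQ hP (by simp [sz] at h ⊢; omega)
    have h3 := H_mem a h2
    rw [T, F_cons p hp] at h3
    rw [F_cons p hp, T, H_mul_S]
    exact Submodule.add_mem _ h1 h3

lemma FF {n : ℕ} (ih : IH (α := α) n) (Q P) (hQ0 : Q ≠ []) (hP0 : P ≠ [])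
    (hQ : WFl Q) (hP : WFl P) (h : sz [] Q + sz [] P ≤ n) : F Q * F P ∈ A0 α := by
  obtain ⟨q, Q, rfl⟩ := List.exists_cons_of_ne_nil hQ0
  obtain ⟨p, P, rfl⟩ := List.exists_cons_of_ne_nil hP0
  have hp : p ≠ [] := hP p (by simp)
  have hP' : WFl P := fun x hx => hP x (by simp [hx])
  have hq : q ≠ [] := hQ q (by simp)
  have hQ' : WFl Q := fun x hx => hQ x (by simp [hx])
  have h1 := TF ih q Q (p :: P) hq hQ' hP (by simp [sz] at h ⊢; omega)
  have h2 := TF ih p P (q :: Q) hp hP' hQ (by simp [sz] at h ⊢; omega)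
  have h3 := TT ih q Q p P hq hp hQ' hP' (by simp [sz] at h ⊢; omega)
  rw [F_cons p hp] at h1
  rw [F_cons q hq] at h2
  rw [F_cons p hp, F_cons q hq, S_mul]
  exact S_mem (Submodule.sub_mem _ (Submodule.add_mem _ h1 h2) h3)

lemma ih_all (n : ℕ) : IH (α := α) n := by
  induction n with
  | zero => intro q Q p P _ _ h; omega
  | succ n ih =>
    intro q Q p P hQ hP h
    have h : sz q Q + sz p P ≤ n := by omega
    by_cases hq : q = []
    · subst hq
      by_cases hp : p = []
      · subst hp
        by_cases hQ0 : Q = []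
        · subst hQ0
          rw [T, F_nil, one_mul]
          exact Submodule.subset_span ⟨_, _, hP, rfl⟩
        · by_cases hP0 : P = []
          · subst hP0
            rw [T, T, F_nil, mul_one]
            exact Submodule.subset_span ⟨[], _, hQ, rfl⟩
          · exact A0_le (FF ih Q P hQ0 hP0 hQ hP h)
      · rw [mul_comm]
        exact B0_le (TF ih p P Q hp hP hQ (by omega))
    · by_cases hp : p = []
      · subst hp
        exact B0_le (TF ih q Q P hq hQ hP h)
      · exact B0_le (TT ih q Q p P hq hp hQ hP h)

lemma A0_mul {f g : List α → ℤ} (hf : f ∈ A0 α) (hg : g ∈ A0 α) : f * g ∈ A0 α := by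
  have h := Submodule.mul_mem_mul hf hg
  unfold A0 at h
  rw [Submodule.span_mul_span] at h
  refine (Submodule.span_le.2 ?_ : _ ≤ A0 α) h
  rintro _ ⟨_, ⟨Q, hQ, rfl⟩, _, ⟨P, hP, rfl⟩, rfl⟩
  exact FF (ih_all _) Q P hQ.1 hP.1 hQ.2 hP.2 le_rfl

lemma value_mem (G : GSH α) (hG : G.WF) : G.value ∈ A0 α := by
  induction G with
  | mono Q => exact Submodule.subset_span ⟨Q, hG, rfl⟩
  | neg G ih => exact Submodule.neg_mem _ (ih hG)
  | add G1 G2 h1 h2 => exact Submodule.add_mem _ (h1 hG.1) (h2 hG.2)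
  | mul G1 G2 h1 h2 => exact A0_mul (h1 hG.1) (h2 hG.2)

end GSHProof

theorem stmt13 {α : Type*} [Fintype α] [DecidableEq α]
    (G : GSH α) (hG : G.WF) :
    ∃ (r : ℕ) (c : Fin r → ℤ) (P : Fin r → List (List α)),
      (∀ i, P i ≠ [] ∧ ∀ q ∈ P i, q ≠ []) ∧
      ∀ w : List α, G.value w = ∑ i, c i * (gsCount (P i) w : ℤ) := by
  obtain ⟨r, c, g, h⟩ := Submodule.mem_span_set'.1 (GSHProof.value_mem G hG)
  choose P hP hPg using fun i => (g i).2
  refine ⟨r, c, P, hP, fun w => ?_⟩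
  rw [← h, Finset.sum_apply]
  refine Finset.sum_congr rfl fun i _ => ?_
  rw [← hPg i]
  rfl
end
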